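/- In the cyclic call system with a single function d of arity 2 and three calls c₀, c₁, c₂ : d → d whose size-change graphs from 2 to 2 are, respectively, {(1, >, 0), (1, >, 1)}, {(0, >, 0), (1, >, 1)}, and {(0, >, 0), (0, >, 1)}, the function d is size-change terminating; equivalently, every infinite sequence of size-change graphs drawn from these three graphs is progressing. -/

import Mathlib

/-!
Every edge of the three graphs is labelled `>`, so any infinite path is already a progressing
trace and it suffices to build a path starting at time `0`. The call `0` forces the current index
to be `1` and the call `2` forces it to be `0`, both leaving the next index free, while the call
`1` keeps the index unchanged. Hence the path looks ahead: at time `i` it sits at `1` exactly when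
the first call from time `i` on that differs from `1` exists and is `0` (`NextIsZero`).
-/

set_option linter.unnecessarySeqFocus false

set_option linter.unusedVariables false

/-- Labels of size-change graph edges: `ge` (preserving, ≥) or `gt` (progressing, >). -/
inductive SCLabel : Type
  | ge | gt
deriving DecidableEq, Repr

/-- An edge `(j, l, j')` of a size-change graph. -/
abbrev SCEdge : Type := ℕ × SCLabel × ℕ

/-- A size-change graph from `n` to `m`: a finite set of labelled edges with
sources below `n` and targets below `m`. -/
def IsSCGraph (n m : ℕ) (G : Finset SCEdge) : Prop :=
  ∀ e ∈ G, e.1 < n ∧ e.2.2 < m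

/-- An infinite sequence of size-change graphs (given by their edge sets) is progressing:
there is a trace (a starting time `k` and a path `t` from `k` onwards through the graphs)
that uses a `>`-labelled edge infinitely often. -/
def ProgressingSeq (E : ℕ → Finset SCEdge) : Prop :=
  ∃ (k : ℕ) (t : ℕ → ℕ),
    (∀ i, k ≤ i → ∃ l, (t i, l, t (i + 1)) ∈ E i) ∧
    ∀ N, ∃ i, N ≤ i ∧ k ≤ i ∧ (t i, SCLabel.gt, t (i + 1)) ∈ E i

/-- An abstract cyclic proof system: judgments, rule instances with a finite list of
premises (given by `numPrem` and `prem`) and a conclusion, trace-object counts `ob`,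
and a size-change graph from the conclusion to each premise. -/
structure CyclicSystem where
  Judg : Type
  Rule : Type
  numPrem : Rule → ℕ
  prem : Rule → ℕ → Judg
  concl : Rule → Judg
  ob : Judg → ℕ
  graph : Rule → ℕ → Finset SCEdge
  graph_bound : ∀ r i, i < numPrem r → IsSCGraph (ob (concl r)) (ob (prem r i)) (graph r i)

/-- A (possibly infinite) derivation in a cyclic proof system: a tree whose nodes are
addressed by the list of child indices leading to them from the root, each node carrying
a rule, such that the `i`-th child's conclusion is the `i`-th premise. -/
structure CDerivation (C : CyclicSystem) where
  rule : List ℕ → C.Rule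
  coh : ∀ p i, i < C.numPrem (rule p) → C.concl (rule (p ++ [i])) = C.prem (rule p) i

namespace CDerivation

variable {C : CyclicSystem}

/-- The valid nodes (addresses) of a derivation. -/
inductive Valid (d : CDerivation C) : List ℕ → Prop
  | root : Valid d []
  | child (p i) : Valid d p → i < C.numPrem (d.rule p) → Valid d (p ++ [i])

/-- The judgment at a node. -/
def judgAt (d : CDerivation C) (p : List ℕ) : C.Judg := C.concl (d.rule p)

/-- The subderivations rooted at `p` and at `p'` are isomorphic. -/
def Iso (d : CDerivation C) (p p' : List ℕ) : Prop :=
  ∀ q : List ℕ, (d.Valid (p ++ q) ↔ d.Valid (p' ++ q)) ∧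
    (d.Valid (p ++ q) → d.rule (p ++ q) = d.rule (p' ++ q))

/-- A derivation is regular if it has only finitely many distinct subderivations
up to isomorphism. -/
def Regular (d : CDerivation C) : Prop :=
  ∃ S : Finset (List ℕ), ∀ p, d.Valid p → ∃ p' ∈ S, d.Iso p p'

/-- The node reached after following the first `i` steps of an infinite branch `b`. -/
def prefixList (b : ℕ → ℕ) (i : ℕ) : List ℕ := (List.range i).map b

/-- `b` describes an infinite branch of `d` (by giving the child index at every step). -/
def IsInfiniteBranch (d : CDerivation C) (b : ℕ → ℕ) : Prop :=
  ∀ i, d.Valid (prefixList b i)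

/-- The sequence of size-change graphs induced along an infinite branch. -/
def branchGraphs (d : CDerivation C) (b : ℕ → ℕ) (i : ℕ) : Finset SCEdge :=
  C.graph (d.rule (prefixList b i)) (b i)

/-- A derivation is a proof if it is regular and the sequence of size-change graphs
induced along every infinite branch is progressing. -/
def IsProof (d : CDerivation C) : Prop :=
  d.Regular ∧ ∀ b : ℕ → ℕ, d.IsInfiniteBranch b → ProgressingSeq (d.branchGraphs b)

end CDerivation

/-- A cyclic representation of a (regular) derivation: a finite downward-closed set of
nodes `RepNode`, a set of buds (leaves of the representation), and a sprout map sending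
each bud to a node strictly below it with an isomorphic subderivation. -/
structure CyclicRep {C : CyclicSystem} (d : CDerivation C) where
  RepNode : Finset (List ℕ)
  root_mem : [] ∈ RepNode
  valid : ∀ p ∈ RepNode, d.Valid p
  downClosed : ∀ p ∈ RepNode, ∀ q : List ℕ, q <+: p → q ∈ RepNode
  Bud : Finset (List ℕ)
  bud_sub : Bud ⊆ RepNode
  bud_no_child : ∀ p ∈ Bud, ∀ i : ℕ, p ++ [i] ∉ RepNode
  internal_child : ∀ p ∈ RepNode, p ∉ Bud → ∀ i, i < C.numPrem (d.rule p) → p ++ [i] ∈ RepNode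
  sprout : List ℕ → List ℕ
  sprout_mem : ∀ p ∈ Bud, sprout p ∈ RepNode
  sprout_strictly_below : ∀ p ∈ Bud, sprout p <+: p ∧ sprout p ≠ p
  sprout_iso : ∀ p ∈ Bud, d.Iso p (sprout p)

/-- A cyclic call system: a finite set of functions with arities, and a finite set of
calls, each with a domain, a codomain and a size-change graph. -/
structure CallSystem where
  Fun : Type
  Call : Type
  funFintype : Fintype Fun
  callFintype : Fintype Call
  ar : Fun → ℕ
  dom : Call → Fun
  codom : Call → Fun
  graph : Call → Finset SCEdge
  bound : ∀ c, IsSCGraph (ar (dom c)) (ar (codom c)) (graph c)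

/-- A function `f₀` of a cyclic call system is size-change terminating if for every
infinite sequence of composable calls starting at `f₀`, the corresponding sequence of
size-change graphs is progressing. -/
def Terminating (S : CallSystem) (f₀ : S.Fun) : Prop :=
  ∀ c : ℕ → S.Call, S.dom (c 0) = f₀ → (∀ i, S.dom (c (i + 1)) = S.codom (c i)) →
    ProgressingSeq (fun i => S.graph (c i))

/-- The cyclic call system of the distance function: one function `d` of arity 2 and
three calls with size-change graphs `{(1,>,0),(1,>,1)}`, `{(0,>,0),(1,>,1)}` and
`{(0,>,0),(0,>,1)}`. -/
def distSystem : CallSystem where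
  Fun := Unit
  Call := Fin 3
  funFintype := inferInstance
  callFintype := inferInstance
  ar _ := 2
  dom _ := ()
  codom _ := ()
  graph := ![{(1, SCLabel.gt, 0), (1, SCLabel.gt, 1)}, {(0, SCLabel.gt, 0), (1, SCLabel.gt, 1)},
    {(0, SCLabel.gt, 0), (0, SCLabel.gt, 1)}]
  bound := by
    intro c e he
    fin_cases c <;> simp_all <;> rcases he with he | he <;> simp [he]

/-- The first call of `c` at or after time `i` that is not the call `1` exists and is the
call `0`. -/
def NextIsZero (c : ℕ → Fin 3) (i : ℕ) : Prop :=
  ∃ j, i ≤ j ∧ c j = 0 ∧ ∀ k, i ≤ k → k < j → c k = 1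

theorem nextIsZero_of_eq_zero {c : ℕ → Fin 3} {i : ℕ} (h : c i = 0) : NextIsZero c i :=
  ⟨i, le_rfl, h, fun k h₁ h₂ => by omega⟩

theorem not_nextIsZero_of_eq_two {c : ℕ → Fin 3} {i : ℕ} (h : c i = 2) : ¬ NextIsZero c i := by
  rintro ⟨j, hij, hj, hk⟩
  rcases hij.eq_or_lt with rfl | hlt
  · simp [h] at hj
  · simpa [h] using hk i le_rfl hlt

theorem nextIsZero_succ_iff_of_eq_one {c : ℕ → Fin 3} {i : ℕ} (h : c i = 1) :
    NextIsZero c (i + 1) ↔ NextIsZero c i := by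
  constructor
  · rintro ⟨j, hij, hj, hk⟩
    refine ⟨j, by omega, hj, fun k h₁ h₂ => ?_⟩
    rcases h₁.eq_or_lt with rfl | hlt
    · exact h
    · exact hk k hlt h₂
  · rintro ⟨j, hij, hj, hk⟩
    have hne : i ≠ j := by
      rintro rfl
      simp [h] at hj
    exact ⟨j, by omega, hj, fun k h₁ h₂ => hk k (by omega) h₂⟩

/-- the function `d` is size-change terminating. -/
theorem dist_terminating : Terminating distSystem () := by
  intro c _ _
  change ℕ → Fin 3 at c
  classical
  let t : ℕ → ℕ := fun i => if NextIsZero c i then 1 else 0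
  have edge : ∀ i, (t i, SCLabel.gt, t (i + 1)) ∈ distSystem.graph (c i) := by
    intro i
    have h3 : c i = 0 ∨ c i = 1 ∨ c i = 2 := by
      generalize c i = x
      revert x
      decide
    rcases h3 with h | h | h
    · by_cases h' : NextIsZero c (i + 1) <;>
        simp [t, distSystem, h, nextIsZero_of_eq_zero h, h']
    · by_cases h' : NextIsZero c i <;>
        simp [t, distSystem, h, nextIsZero_succ_iff_of_eq_one h, h']
    · by_cases h' : NextIsZero c (i + 1) <;>
        simp [t, distSystem, h, not_nextIsZero_of_eq_two h, h']
  exact ⟨0, t, fun i _ => ⟨_, edge i⟩, fun N => ⟨N, le_rfl, N.zero_le, edge N⟩⟩
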